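/- Let f : ℝ → ℝ be smooth (C^∞), let x̃ be a global solution of ẋ = f(x), and let t_in ∈ ℝ. Then there exist global solutions g₁, g₂ of ẋ = f(x) such that g₁(t) = g₂(t) for all t < 0, g₁ is 2π-periodic (g₁(t + 2π) = g₁(t) for all t), and g₁(t_in) = x̃(t_in), if and only if x̃ is 2π-periodic; in that case the pair is unique and g₁ = g₂ = x̃, so that g₂ is 2π-periodic as well. (This expresses that on the temporal structure obtained from the Visser splitting Split(ℝ, [0, +∞), 2) by further identifying the trunk time −π with the first-branch time +π₁ — thereby introducing a chronological circularity through the first branch — the Cauchy problem ẋ = f(x), x(t_in) = x̃(t_in) is well-defined if and only if the consistency condition that x̃ takes equal values at identified times holds, in which case event A may be both the cause and the effect of event B without logical inconsistency.) -/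

import Mathlib

open Real

/-- `g : ℝ → ℝ` is a global solution of the autonomous ODE `ẋ = f(x)`:
it is differentiable at every `t` with derivative `g'(t) = f(g(t))`. -/
def IsGlobalSolution (f g : ℝ → ℝ) : Prop := ∀ t : ℝ, HasDerivAt g (f (g t)) t

/-!
A global solution of an autonomous ODE with locally Lipschitz right-hand side is determined by its
value at a single time. The initial condition therefore forces `g₁` to be the given solution, and
agreement with `g₁` at one trunk time forces `g₂` to be that solution too; what remains of the
identification of times is the requirement that the given solution be periodic.
-/

section

open scoped NNReal Topology

variable {E : Type*} [NormedAddCommGroup E] [NormedSpace ℝ E] {v : E → E} {γ γ' : ℝ → E} {t₀ : ℝ}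

theorem isIntegralCurveAt_eventuallyEq_of_lipschitzOnWith {K : ℝ≥0} {s : Set E}
    (hv : LipschitzOnWith K v s) (hs : s ∈ 𝓝 (γ t₀)) (hγ : IsIntegralCurveAt γ (fun _ ↦ v) t₀)
    (hγ' : IsIntegralCurveAt γ' (fun _ ↦ v) t₀) (h : γ t₀ = γ' t₀) : γ =ᶠ[𝓝 t₀] γ' :=
  have mem_s : ∀ᶠ t in 𝓝 t₀, γ t ∈ s := hγ.continuousAt hs
  have mem_s' : ∀ᶠ t in 𝓝 t₀, γ' t ∈ s := hγ'.continuousAt (h ▸ hs)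
  ODE_solution_unique_of_eventually (.of_forall fun _ ↦ hv) (hγ.and mem_s) (hγ'.and mem_s') h

theorem isIntegralCurve_eq_of_locallyLipschitz (hv : LocallyLipschitz v)
    (hγ : IsIntegralCurve γ (fun _ ↦ v)) (hγ' : IsIntegralCurve γ' (fun _ ↦ v))
    (h : γ t₀ = γ' t₀) : γ = γ' := by
  have isClosed_eqLocus : IsClosed {t | γ t = γ' t} := isClosed_eq hγ.continuous hγ'.continuous
  have isOpen_eqLocus : IsOpen {t | γ t = γ' t} := isOpen_iff_mem_nhds.2 fun t ht ↦
    have ⟨_, _, hs, hvs⟩ := hv (γ t)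
    isIntegralCurveAt_eventuallyEq_of_lipschitzOnWith hvs hs (hγ.isIntegralCurveAt t)
      (hγ'.isIntegralCurveAt t) ht
  have eqLocus_eq_univ : {t | γ t = γ' t} = Set.univ :=
    IsClopen.eq_univ ⟨isClosed_eqLocus, isOpen_eqLocus⟩ ⟨t₀, h⟩
  exact funext (Set.eq_univ_iff_forall.1 eqLocus_eq_univ)

/-- The set `S` is the trunk shared by the two branches, and the identification of times along the
first branch is by translation by `T`. -/
theorem cauchy_circularity_through_branch_general (hv : LocallyLipschitz v)
    (hγ : IsIntegralCurve γ (fun _ ↦ v)) (t₀ T : ℝ) {S : Set ℝ} (hS : S.Nonempty) :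
    ((∃ g₁ g₂ : ℝ → E, IsIntegralCurve g₁ (fun _ ↦ v) ∧ IsIntegralCurve g₂ (fun _ ↦ v) ∧
        S.EqOn g₁ g₂ ∧ g₁.Periodic T ∧ g₁ t₀ = γ t₀) ↔ γ.Periodic T) ∧
    ∀ g₁ g₂ : ℝ → E, IsIntegralCurve g₁ (fun _ ↦ v) → IsIntegralCurve g₂ (fun _ ↦ v) →
      S.EqOn g₁ g₂ → g₁ t₀ = γ t₀ → g₁ = γ ∧ g₂ = γ := by
  refine ⟨⟨?_, fun hT ↦ ⟨γ, γ, hγ, hγ, Set.eqOn_refl γ S, hT, rfl⟩⟩, ?_⟩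
  · rintro ⟨g₁, -, hg₁, -, -, hT, h₀⟩
    exact isIntegralCurve_eq_of_locallyLipschitz hv hg₁ hγ h₀ ▸ hT
  · intro g₁ g₂ hg₁ hg₂ trunk_eq h₀
    obtain ⟨t, ht⟩ := hS
    have g₁_eq : g₁ = γ := isIntegralCurve_eq_of_locallyLipschitz hv hg₁ hγ h₀
    have g₁_eq_g₂ : g₁ = g₂ := isIntegralCurve_eq_of_locallyLipschitz hv hg₁ hg₂ (trunk_eq ht)
    exact ⟨g₁_eq, g₁_eq_g₂ ▸ g₁_eq⟩

end

/-- On the temporal structure obtained from `Split(ℝ, [0,+∞), 2)` by identifying the trunk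
time `−π` with the first-branch time `+π₁` (a chronological circularity through the first
branch), an ℝ-valued function is a pair `(g₁, g₂)` of global solutions agreeing on `(−∞, 0)`
with `g₁` 2π-periodic. The Cauchy problem `ẋ = f(x)`, `x(t_in) = xT(t_in)` is well-defined
if and only if `xT` is 2π-periodic; in that case the pair is unique and `g₁ = g₂ = xT`, so
`g₂` is 2π-periodic as well. -/
theorem cauchy_circularity_through_branch (f : ℝ → ℝ) (hf : ContDiff ℝ (⊤ : ℕ∞) f)
    (xT : ℝ → ℝ) (hx : IsGlobalSolution f xT) (t_in : ℝ) :
    ((∃ g₁ g₂ : ℝ → ℝ, IsGlobalSolution f g₁ ∧ IsGlobalSolution f g₂ ∧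
        (∀ t : ℝ, t < 0 → g₁ t = g₂ t) ∧ (∀ t : ℝ, g₁ (t + 2 * π) = g₁ t) ∧
        g₁ t_in = xT t_in) ↔ (∀ t : ℝ, xT (t + 2 * π) = xT t)) ∧
    ((∀ t : ℝ, xT (t + 2 * π) = xT t) → ∀ g₁ g₂ : ℝ → ℝ,
      IsGlobalSolution f g₁ → IsGlobalSolution f g₂ →
      (∀ t : ℝ, t < 0 → g₁ t = g₂ t) → (∀ t : ℝ, g₁ (t + 2 * π) = g₁ t) →
      g₁ t_in = xT t_in →
      (∀ t : ℝ, g₁ t = xT t) ∧ (∀ t : ℝ, g₂ t = xT t)) := by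
  have hf_lip : LocallyLipschitz f := (hf.of_le (by exact_mod_cast le_top)).locallyLipschitz
  obtain ⟨solvable_iff, unique⟩ :=
    cauchy_circularity_through_branch_general hf_lip hx t_in (2 * π) (Set.nonempty_Iio (a := 0))
  exact ⟨solvable_iff, fun _ g₁ g₂ hg₁ hg₂ trunk_eq _ h₀ ↦
    (unique g₁ g₂ hg₁ hg₂ trunk_eq h₀).imp congr_fun congr_fun⟩
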